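/- Let d ∈ {2,3}, let Ω ⊂ ℝ^d be a bounded convex polytope, let p ∈ (1,∞), and let ω be an A_p weight, with p' = p/(p−1) and ω' = ω^{−1/(p−1)}. Let B : Ω̄ → ℝ^{d×d} be a C^∞ symmetric matrix-valued map with αI ⪯ B(x) for all x, for some α > 0. Suppose there is C₀ > 0 such that for every Ψ ∈ C_c^∞(Ω) there exists w ∈ W^{1,p'}_0(ω',Ω) with ∫_Ω B∇w·∇φ dx = ∫_Ω Ψ φ dx for all φ ∈ C_c^∞(Ω) and ‖∇w‖_{L^{p'}(ω',Ω)} ≤ C₀ ‖Ψ‖_{L^{p'}(ω',Ω)}. Then every v ∈ W^{1,p}_0(ω,Ω) satisfying ∫_Ω B∇v·∇φ dx = ⟨Φ,φ⟩ for all φ ∈ C_c^∞(Ω), for some Φ ∈ W^{−1,p}(ω,Ω), obeys ‖v‖_{L^p(ω,Ω)} ≤ C₀ ‖Φ‖_{W^{−1,p}(ω,Ω)}. -/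

import Mathlib

/-!
Put `q = p/(p-1)` and `σ = ω^{-1/(p-1)}`. Since `ω^{1/p} σ^{1/q} = 1`, the unweighted pairing makes
`L^q(σ)` the dual of `L^p(ω)`, and test functions are dense in `L^q(σ)`, so it is enough to bound
`∫ v Ψ` for test functions `Ψ`. Let `w` solve the adjoint problem with datum `Ψ`. Approximating `v`
by test functions in the equation of `w` gives `∫ v Ψ = ∫ B∇v·∇w`, and approximating `w` by test
functions in the equation of `v` gives `∫ B∇v·∇w ≤ ‖Φ‖ ‖∇w‖ ≤ C₀ ‖Φ‖ ‖Ψ‖`.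

The condition `IsAp` is phrased with Bochner integrals, which vanish on non-integrable functions, so
it does not by itself make `σ` locally integrable. That is extracted from the adjoint problem
instead: if `|Ψ|^q σ` were not integrable, the a priori bound would read `‖∇w‖ ≤ 0`, whence
`∫ Ψ² = 0`.
-/

open MeasureTheory Filter
open scoped RealInnerProductSpace Topology

noncomputable section

/-- Euclidean space `ℝ^d`. -/
abbrev Euc (d : ℕ) := EuclideanSpace ℝ (Fin d)

/-- The weighted norm `‖f‖_{L^p(ω,Ω)} = (∫_Ω |f|^p ω dx)^{1/p}` of a scalar function. -/
def wNorm {d : ℕ} (p : ℝ) (ω : Euc d → ℝ) (Ω : Set (Euc d)) (f : Euc d → ℝ) : ℝ :=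
  (∫ x in Ω, |f x| ^ p * ω x) ^ (1 / p)

/-- The weighted norm `‖F‖_{L^p(ω,Ω)} = (∫_Ω ‖F‖^p ω dx)^{1/p}` of a vector field. -/
def wNormV {d : ℕ} (p : ℝ) (ω : Euc d → ℝ) (Ω : Set (Euc d)) (F : Euc d → Euc d) : ℝ :=
  (∫ x in Ω, ‖F x‖ ^ p * ω x) ^ (1 / p)

/-- Membership `f ∈ L^p(ω,Ω)` for a scalar function. -/
def MemWLp {d : ℕ} (p : ℝ) (ω : Euc d → ℝ) (Ω : Set (Euc d)) (f : Euc d → ℝ) : Prop :=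
  AEStronglyMeasurable f (volume.restrict Ω) ∧
    IntegrableOn (fun x => |f x| ^ p * ω x) Ω volume

/-- Membership `F ∈ L^p(ω,Ω)^d` for a vector field. -/
def MemWLpV {d : ℕ} (p : ℝ) (ω : Euc d → ℝ) (Ω : Set (Euc d)) (F : Euc d → Euc d) : Prop :=
  AEStronglyMeasurable F (volume.restrict Ω) ∧
    IntegrableOn (fun x => ‖F x‖ ^ p * ω x) Ω volume

/-- `ω` is a weight: locally integrable and positive almost everywhere. -/
def IsWeight {d : ℕ} (ω : Euc d → ℝ) : Prop :=
  LocallyIntegrable ω volume ∧ ∀ᵐ x ∂(volume : Measure (Euc d)), 0 < ω x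

/-- The Muckenhoupt `A_p` quantity of `ω` is bounded by `M` over every Euclidean ball:
`(⨍_B ω)(⨍_B ω^{-1/(p-1)})^{p-1} ≤ M`. -/
def APBound {d : ℕ} (p : ℝ) (ω : Euc d → ℝ) (M : ℝ) : Prop :=
  ∀ (z : Euc d) (r : ℝ), 0 < r →
    (((volume (Metric.ball z r)).toReal)⁻¹ * ∫ x in Metric.ball z r, ω x) *
      (((volume (Metric.ball z r)).toReal)⁻¹ *
        ∫ x in Metric.ball z r, ω x ^ (-(1 / (p - 1)))) ^ (p - 1) ≤ M

/-- `ω` belongs to the Muckenhoupt class `A_p`: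
it is a weight with finite Muckenhoupt characteristic. -/
def IsAp {d : ℕ} (p : ℝ) (ω : Euc d → ℝ) : Prop :=
  IsWeight ω ∧ ∃ M : ℝ, APBound p ω M

/-- The dual weight `ω' = ω^{-1/(p-1)}`. -/
def dualWeight {d : ℕ} (p : ℝ) (ω : Euc d → ℝ) : Euc d → ℝ :=
  fun x => ω x ^ (-(1 / (p - 1)))

/-- Test functions on `Ω`: smooth functions compactly supported inside `Ω`. -/
def TestFun {d : ℕ} (Ω : Set (Euc d)) (φ : Euc d → ℝ) : Prop :=
  ContDiff ℝ (⊤ : ℕ∞) φ ∧ HasCompactSupport φ ∧ tsupport φ ⊆ Ω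

/-- `G` is the weak (distributional) gradient of `u` on `Ω`. -/
def IsWeakGradOn {d : ℕ} (Ω : Set (Euc d)) (u : Euc d → ℝ) (G : Euc d → Euc d) : Prop :=
  ∀ φ : Euc d → ℝ, TestFun Ω φ →
    (∫ x in Ω, u x • gradient φ x) = -∫ x in Ω, φ x • G x

/-- `u ∈ W^{1,p}_0(ω,Ω)`, with weak gradient `G`: both `u` and `G` belong to `L^p(ω,Ω)`,
`G` is the weak gradient of `u` on `Ω`, and `u` lies in the closure of the test functions
in the `W^{1,p}(ω,Ω)` norm. -/
def MemW1p0 {d : ℕ} (p : ℝ) (ω : Euc d → ℝ) (Ω : Set (Euc d))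
    (u : Euc d → ℝ) (G : Euc d → Euc d) : Prop :=
  MemWLp p ω Ω u ∧ MemWLpV p ω Ω G ∧ IsWeakGradOn Ω u G ∧
  ∀ ε : ℝ, 0 < ε → ∃ φ : Euc d → ℝ, TestFun Ω φ ∧
    wNorm p ω Ω (fun x => u x - φ x) + wNormV p ω Ω (fun x => G x - gradient φ x) < ε

/-- The `W^{-1,p}(ω,Ω)` norm of a functional `F` on test functions: the supremum of `F φ` over
test functions `φ` whose gradient has `L^{p'}(ω',Ω)` norm at most one, where `p'` is the
conjugate exponent and `ω' = ω^{-1/(p-1)}` the dual weight. -/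
def dualNorm {d : ℕ} (p : ℝ) (ω : Euc d → ℝ) (Ω : Set (Euc d)) (F : (Euc d → ℝ) → ℝ) : ℝ :=
  sSup {c : ℝ | ∃ φ : Euc d → ℝ, TestFun Ω φ ∧
    wNormV (p / (p - 1)) (dualWeight p ω) Ω (fun x => gradient φ x) ≤ 1 ∧ c = F φ}

/-- `Ω ⊆ ℝ^d` is a bounded convex polytope (open). -/
def IsBoundedConvexPolytope {d : ℕ} (Ω : Set (Euc d)) : Prop :=
  IsOpen Ω ∧ Convex ℝ Ω ∧ Bornology.IsBounded Ω ∧ Ω.Nonempty ∧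
    ∃ S : Finset (Euc d), closure Ω = convexHull ℝ (S : Set (Euc d))

open scoped ENNReal

section Lp

variable {X E : Type*} [MeasurableSpace X] {μ : Measure X} [NormedAddCommGroup E]

lemma lpNorm_congr_ae {p : ℝ≥0∞} {f g : X → E} (hfg : f =ᵐ[μ] g) :
    lpNorm f p μ = lpNorm g p μ := by
  by_cases hf : AEStronglyMeasurable f μ
  · rw [← toReal_eLpNorm hf, ← toReal_eLpNorm (hf.congr hfg), eLpNorm_congr_ae hfg]
  · rw [lpNorm_of_not_aestronglyMeasurable hf,
      lpNorm_of_not_aestronglyMeasurable fun hg => hf (hg.congr hfg.symm)]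

lemma lpNorm_ofReal_eq {p : ℝ} (hp : 0 < p) {f : X → E} (hf : AEStronglyMeasurable f μ) :
    lpNorm f (ENNReal.ofReal p) μ = (∫ x, ‖f x‖ ^ p ∂μ) ^ p⁻¹ := by
  rw [lpNorm_eq_integral_norm_rpow_toReal (ENNReal.ofReal_pos.2 hp).ne' ENNReal.ofReal_ne_top hf,
    ENNReal.toReal_ofReal hp.le]

lemma integrable_norm_rpow_iff_memLp_ofReal {p : ℝ} (hp : 0 < p) {f : X → E}
    (hf : AEStronglyMeasurable f μ) :
    Integrable (fun x => ‖f x‖ ^ p) μ ↔ MemLp f (ENNReal.ofReal p) μ := by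
  rw [← integrable_norm_rpow_iff hf (ENNReal.ofReal_pos.2 hp).ne' ENNReal.ofReal_ne_top,
    ENNReal.toReal_ofReal hp.le]

lemma abs_integral_inner_le_lpNorm_mul_lpNorm [InnerProductSpace ℝ E] {p q : ℝ}
    (hpq : p.HolderConjugate q) {f g : X → E} (hf : MemLp f (ENNReal.ofReal p) μ)
    (hg : MemLp g (ENNReal.ofReal q) μ) :
    |∫ x, ⟪f x, g x⟫ ∂μ| ≤ lpNorm f (ENNReal.ofReal p) μ * lpNorm g (ENNReal.ofReal q) μ := by
  have := hpq.ennrealOfReal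
  calc |∫ x, ⟪f x, g x⟫ ∂μ| ≤ ∫ x, |⟪f x, g x⟫| ∂μ := abs_integral_le_integral_abs
    _ ≤ ∫ x, ‖f x‖ * ‖g x‖ ∂μ :=
      integral_mono_of_nonneg (ae_of_all _ fun _ => abs_nonneg _) (hf.norm.integrable_mul hg.norm)
        (ae_of_all _ fun x => abs_real_inner_le_norm (f x) (g x))
    _ ≤ lpNorm f (ENNReal.ofReal p) μ * lpNorm g (ENNReal.ofReal q) μ := by
      simpa only [lpNorm_ofReal_eq hpq.pos hf.1, lpNorm_ofReal_eq hpq.symm.pos hg.1, one_div]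
        using integral_mul_norm_le_Lp_mul_Lq hpq hf hg

end Lp

/-- The measure `ρ dμ`, so that the norm of `L^p(ρ)` is the `L^p` norm with respect to
`weightedMeasure ρ μ`. Negative values of `ρ` are truncated to `0`. -/
def weightedMeasure {X : Type*} [MeasurableSpace X] (ρ : X → ℝ) (μ : Measure X) : Measure X :=
  μ.withDensity fun x => ENNReal.ofReal (ρ x)

section WeightedMeasure

variable {X E : Type*} [MeasurableSpace X] {μ : Measure X} [NormedAddCommGroup E]
  {ρ : X → ℝ} {p : ℝ} {f : X → E}

lemma weightedMeasure_absolutelyContinuous : weightedMeasure ρ μ ≪ μ :=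
  withDensity_absolutelyContinuous _ _

lemma absolutelyContinuous_weightedMeasure (hρ : AEMeasurable ρ μ) (hpos : ∀ᵐ x ∂μ, 0 < ρ x) :
    μ ≪ weightedMeasure ρ μ :=
  withDensity_absolutelyContinuous' hρ.ennreal_ofReal
    (hpos.mono fun _ hx => (ENNReal.ofReal_pos.2 hx).ne')

lemma aestronglyMeasurable_weightedMeasure_iff (hρ : AEMeasurable ρ μ)
    (hpos : ∀ᵐ x ∂μ, 0 < ρ x) :
    AEStronglyMeasurable f (weightedMeasure ρ μ) ↔ AEStronglyMeasurable f μ :=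
  ⟨fun h => h.mono_ac (absolutelyContinuous_weightedMeasure hρ hpos),
    fun h => h.mono_ac weightedMeasure_absolutelyContinuous⟩

lemma integrable_weightedMeasure_iff (hρ : AEMeasurable ρ μ) (hpos : ∀ᵐ x ∂μ, 0 < ρ x)
    {g : X → ℝ} : Integrable g (weightedMeasure ρ μ) ↔ Integrable (fun x => g x * ρ x) μ := by
  rw [weightedMeasure, integrable_withDensity_iff_integrable_smul₀' hρ.ennreal_ofReal
    (ae_of_all _ fun _ => ENNReal.ofReal_lt_top)]
  refine integrable_congr (hpos.mono fun x hx => ?_)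
  simp only [ENNReal.toReal_ofReal hx.le, smul_eq_mul, mul_comm]

lemma integral_weightedMeasure (hρ : AEMeasurable ρ μ) (hpos : ∀ᵐ x ∂μ, 0 < ρ x)
    (g : X → ℝ) : ∫ x, g x ∂weightedMeasure ρ μ = ∫ x, g x * ρ x ∂μ := by
  rw [weightedMeasure, integral_withDensity_eq_integral_toReal_smul₀ hρ.ennreal_ofReal
    (ae_of_all _ fun _ => ENNReal.ofReal_lt_top)]
  refine integral_congr_ae (hpos.mono fun x hx => ?_)
  simp only [ENNReal.toReal_ofReal hx.le, smul_eq_mul, mul_comm]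

lemma memLp_weightedMeasure_iff (hρ : AEMeasurable ρ μ) (hpos : ∀ᵐ x ∂μ, 0 < ρ x)
    (hp : 0 < p) :
    MemLp f (ENNReal.ofReal p) (weightedMeasure ρ μ) ↔
      AEStronglyMeasurable f μ ∧ Integrable (fun x => ‖f x‖ ^ p * ρ x) μ := by
  rw [← integrable_weightedMeasure_iff hρ hpos, ← aestronglyMeasurable_weightedMeasure_iff hρ hpos]
  exact ⟨fun h => ⟨h.1, (integrable_norm_rpow_iff_memLp_ofReal hp h.1).2 h⟩,
    fun h => (integrable_norm_rpow_iff_memLp_ofReal hp h.1).1 h.2⟩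

lemma lpNorm_weightedMeasure (hρ : AEMeasurable ρ μ) (hpos : ∀ᵐ x ∂μ, 0 < ρ x) (hp : 0 < p)
    (hf : AEStronglyMeasurable f μ) :
    lpNorm f (ENNReal.ofReal p) (weightedMeasure ρ μ) = (∫ x, ‖f x‖ ^ p * ρ x ∂μ) ^ p⁻¹ := by
  rw [lpNorm_ofReal_eq hp (hf.mono_ac weightedMeasure_absolutelyContinuous),
    integral_weightedMeasure hρ hpos]

variable [NormedSpace ℝ E]

lemma norm_rpow_smul_rpow (hp : 0 < p) {r : ℝ} (hr : 0 ≤ r) (y : E) :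
    ‖r ^ p⁻¹ • y‖ ^ p = ‖y‖ ^ p * r := by
  rw [norm_smul, Real.norm_of_nonneg (Real.rpow_nonneg hr _),
    Real.mul_rpow (Real.rpow_nonneg hr _) (norm_nonneg y), ← Real.rpow_mul hr,
    inv_mul_cancel₀ hp.ne', Real.rpow_one, mul_comm]

lemma memLp_rpow_smul_iff (hρ : AEMeasurable ρ μ) (hpos : ∀ᵐ x ∂μ, 0 < ρ x) (hp : 0 < p)
    (hf : AEStronglyMeasurable f μ) :
    MemLp (fun x => ρ x ^ p⁻¹ • f x) (ENNReal.ofReal p) μ ↔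
      MemLp f (ENNReal.ofReal p) (weightedMeasure ρ μ) := by
  rw [memLp_weightedMeasure_iff hρ hpos hp, and_iff_right hf,
    ← integrable_norm_rpow_iff_memLp_ofReal hp (f := fun x => ρ x ^ p⁻¹ • f x)
      ((hρ.pow_const _).aestronglyMeasurable.smul hf)]
  exact integrable_congr (hpos.mono fun x hx => norm_rpow_smul_rpow hp hx.le (f x))

lemma lpNorm_rpow_smul (hρ : AEMeasurable ρ μ) (hpos : ∀ᵐ x ∂μ, 0 < ρ x) (hp : 0 < p)
    (hf : AEStronglyMeasurable f μ) :
    lpNorm (fun x => ρ x ^ p⁻¹ • f x) (ENNReal.ofReal p) μ =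
      lpNorm f (ENNReal.ofReal p) (weightedMeasure ρ μ) := by
  rw [lpNorm_weightedMeasure hρ hpos hp hf,
    lpNorm_ofReal_eq hp (f := fun x => ρ x ^ p⁻¹ • f x)
      ((hρ.pow_const _).aestronglyMeasurable.smul hf),
    integral_congr_ae (hpos.mono fun x hx => norm_rpow_smul_rpow hp hx.le (f x))]

end WeightedMeasure

/-- Conjugate exponents `p`, `q` together with a.e. positive weights `ω`, `σ` for which `L^q(σ)` is
the dual of `L^p(ω)` under the unweighted pairing `∫ f g dμ`. -/
structure DualWeights {X : Type*} [MeasurableSpace X] (p q : ℝ) (ω σ : X → ℝ) (μ : Measure X) :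
    Prop where
  holderConjugate : p.HolderConjugate q
  aemeasurable_left : AEMeasurable ω μ
  aemeasurable_right : AEMeasurable σ μ
  pos_left : ∀ᵐ x ∂μ, 0 < ω x
  pos_right : ∀ᵐ x ∂μ, 0 < σ x
  rpow_mul_rpow : ∀ᵐ x ∂μ, ω x ^ p⁻¹ * σ x ^ q⁻¹ = 1

namespace DualWeights

variable {X E : Type*} [MeasurableSpace X] {μ : Measure X} {p q : ℝ} {ω σ : X → ℝ}

lemma symm (h : DualWeights p q ω σ μ) : DualWeights q p σ ω μ where
  holderConjugate := h.holderConjugate.symm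
  aemeasurable_left := h.aemeasurable_right
  aemeasurable_right := h.aemeasurable_left
  pos_left := h.pos_right
  pos_right := h.pos_left
  rpow_mul_rpow := h.rpow_mul_rpow.mono fun _ hx => (mul_comm _ _).trans hx

lemma one_le_left (h : DualWeights p q ω σ μ) : 1 ≤ ENNReal.ofReal p := by
  simpa only [ENNReal.ofReal_one] using ENNReal.ofReal_le_ofReal h.holderConjugate.lt.le

lemma aestronglyMeasurable_left [NormedAddCommGroup E] {f : X → E} (h : DualWeights p q ω σ μ)
    (hf : MemLp f (ENNReal.ofReal p) (weightedMeasure ω μ)) : AEStronglyMeasurable f μ :=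
  ((memLp_weightedMeasure_iff h.aemeasurable_left h.pos_left h.holderConjugate.pos).1 hf).1

lemma memLp_rpow_smul_left_iff [NormedAddCommGroup E] [NormedSpace ℝ E] {f : X → E}
    (h : DualWeights p q ω σ μ) (hf : AEStronglyMeasurable f μ) :
    MemLp (fun x => ω x ^ p⁻¹ • f x) (ENNReal.ofReal p) μ ↔
      MemLp f (ENNReal.ofReal p) (weightedMeasure ω μ) :=
  memLp_rpow_smul_iff h.aemeasurable_left h.pos_left h.holderConjugate.pos hf

lemma lpNorm_rpow_smul_left [NormedAddCommGroup E] [NormedSpace ℝ E] {f : X → E}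
    (h : DualWeights p q ω σ μ) (hf : AEStronglyMeasurable f μ) :
    lpNorm (fun x => ω x ^ p⁻¹ • f x) (ENNReal.ofReal p) μ =
      lpNorm f (ENNReal.ofReal p) (weightedMeasure ω μ) :=
  lpNorm_rpow_smul h.aemeasurable_left h.pos_left h.holderConjugate.pos hf

variable [NormedAddCommGroup E] [InnerProductSpace ℝ E] {f : X → E} {g : X → E}

lemma inner_rpow_smul_ae_eq (h : DualWeights p q ω σ μ) (f g : X → E) :
    (fun x => ⟪ω x ^ p⁻¹ • f x, σ x ^ q⁻¹ • g x⟫) =ᵐ[μ] fun x => ⟪f x, g x⟫ := by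
  filter_upwards [h.rpow_mul_rpow] with x hx
  rw [real_inner_smul_left, real_inner_smul_right, ← mul_assoc, hx, one_mul]

lemma integrable_inner (h : DualWeights p q ω σ μ)
    (hf : MemLp f (ENNReal.ofReal p) (weightedMeasure ω μ))
    (hg : MemLp g (ENNReal.ofReal q) (weightedMeasure σ μ)) :
    Integrable (fun x => ⟪f x, g x⟫) μ := by
  have := h.holderConjugate.ennrealOfReal
  have hf' := (h.memLp_rpow_smul_left_iff (h.aestronglyMeasurable_left hf)).2 hf
  have hg' := (h.symm.memLp_rpow_smul_left_iff (h.symm.aestronglyMeasurable_left hg)).2 hg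
  exact (memLp_one_iff_integrable.1 ((innerSL ℝ).memLp_of_bilin 1 hf' hg')).congr
    (h.inner_rpow_smul_ae_eq f g)

lemma abs_integral_inner_le (h : DualWeights p q ω σ μ)
    (hf : MemLp f (ENNReal.ofReal p) (weightedMeasure ω μ))
    (hg : MemLp g (ENNReal.ofReal q) (weightedMeasure σ μ)) :
    |∫ x, ⟪f x, g x⟫ ∂μ| ≤ lpNorm f (ENNReal.ofReal p) (weightedMeasure ω μ) *
      lpNorm g (ENNReal.ofReal q) (weightedMeasure σ μ) := by
  have hfm := h.aestronglyMeasurable_left hf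
  have hgm := h.symm.aestronglyMeasurable_left hg
  rw [← h.lpNorm_rpow_smul_left hfm, ← h.symm.lpNorm_rpow_smul_left hgm,
    ← integral_congr_ae (h.inner_rpow_smul_ae_eq f g)]
  exact abs_integral_inner_le_lpNorm_mul_lpNorm h.holderConjugate
    ((h.memLp_rpow_smul_left_iff hfm).2 hf) ((h.symm.memLp_rpow_smul_left_iff hgm).2 hg)

lemma tendsto_integral_inner {ι : Type*} {l : Filter ι} {F : ι → X → E}
    (h : DualWeights p q ω σ μ)
    (hF : ∀ i, MemLp (F i) (ENNReal.ofReal p) (weightedMeasure ω μ))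
    (hf : MemLp f (ENNReal.ofReal p) (weightedMeasure ω μ))
    (hg : MemLp g (ENNReal.ofReal q) (weightedMeasure σ μ))
    (hlim : Tendsto (fun i => lpNorm (F i - f) (ENNReal.ofReal p) (weightedMeasure ω μ)) l (𝓝 0)) :
    Tendsto (fun i => ∫ x, ⟪F i x, g x⟫ ∂μ) l (𝓝 (∫ x, ⟪f x, g x⟫ ∂μ)) := by
  rw [tendsto_iff_norm_sub_tendsto_zero]
  refine squeeze_zero (fun _ => norm_nonneg _) (fun i => ?_)
    (by simpa only [zero_mul] using
      hlim.mul_const (lpNorm g (ENNReal.ofReal q) (weightedMeasure σ μ)))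
  rw [← integral_sub (h.integrable_inner (hF i) hg) (h.integrable_inner hf hg)]
  simpa only [inner_sub_left, Pi.sub_apply, Real.norm_eq_abs] using
    h.abs_integral_inner_le ((hF i).sub hf) hg

end DualWeights

section NormByDuality

variable {X E : Type*} [MeasurableSpace X] {μ : Measure X} [NormedAddCommGroup E]
  [InnerProductSpace ℝ E] {p q : ℝ}

lemma inner_norm_rpow_sub_two_smul_self (hp : p ≠ 0) (y : E) :
    ⟪y, ‖y‖ ^ (p - 2) • y⟫ = ‖y‖ ^ p := by
  rcases eq_or_ne y 0 with rfl | hy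
  · simp only [inner_zero_left, norm_zero, Real.zero_rpow hp]
  · rw [real_inner_smul_right, real_inner_self_eq_norm_sq, ← Real.rpow_two,
      ← Real.rpow_add (norm_pos_iff.2 hy), sub_add_cancel]

lemma norm_norm_rpow_sub_two_smul_rpow (hpq : p.HolderConjugate q) (y : E) :
    ‖‖y‖ ^ (p - 2) • y‖ ^ q = ‖y‖ ^ p := by
  rcases eq_or_ne y 0 with rfl | hy
  · simp only [smul_zero, norm_zero, Real.zero_rpow hpq.ne_zero, Real.zero_rpow hpq.symm.ne_zero]
  · have hy' := norm_pos_iff.2 hy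
    rw [norm_smul, Real.norm_of_nonneg (Real.rpow_nonneg hy'.le _),
      ← Real.rpow_add_one hy'.ne', ← Real.rpow_mul hy'.le, show p - 2 + 1 = p - 1 by ring,
      hpq.sub_one_mul_conj]

lemma lpNorm_le_of_forall_integral_inner_le (hpq : p.HolderConjugate q) {u : X → E}
    (hu : MemLp u (ENNReal.ofReal p) μ) {C : ℝ} (hC : 0 ≤ C)
    (hle : ∀ h : X → E, MemLp h (ENNReal.ofReal q) μ →
      ∫ x, ⟪u x, h x⟫ ∂μ ≤ C * lpNorm h (ENNReal.ofReal q) μ) :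
    lpNorm u (ENNReal.ofReal p) μ ≤ C := by
  set h : X → E := fun x => ‖u x‖ ^ (p - 2) • u x
  have h_meas : AEStronglyMeasurable h μ :=
    (hu.1.norm.aemeasurable.pow_const _).aestronglyMeasurable.smul hu.1
  have h_norm (x : X) : ‖h x‖ ^ q = ‖u x‖ ^ p := norm_norm_rpow_sub_two_smul_rpow hpq (u x)
  have h_memLp : MemLp h (ENNReal.ofReal q) μ := by
    simpa only [← integrable_norm_rpow_iff_memLp_ofReal hpq.symm.pos h_meas, h_norm] using
      (integrable_norm_rpow_iff_memLp_ofReal hpq.pos hu.1).2 hu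
  set I : ℝ := ∫ x, ‖u x‖ ^ p ∂μ
  have hI_le : I ≤ C * I ^ q⁻¹ := by
    simpa only [h, inner_norm_rpow_sub_two_smul_self hpq.ne_zero,
      lpNorm_ofReal_eq hpq.symm.pos h_meas, h_norm] using hle h h_memLp
  rw [lpNorm_ofReal_eq hpq.pos hu.1]
  rcases (integral_nonneg fun x => Real.rpow_nonneg (norm_nonneg (u x)) p : 0 ≤ I).eq_or_lt
    with hI | hI
  · simpa only [← hI, Real.zero_rpow (inv_ne_zero hpq.ne_zero)] using hC
  · refine le_of_mul_le_mul_right ?_ (Real.rpow_pos_of_pos hI q⁻¹)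
    rwa [← Real.rpow_add hI, hpq.inv_add_inv_eq_one, Real.rpow_one]

lemma DualWeights.lpNorm_le_of_forall_integral_inner_le {ω σ : X → ℝ}
    (hw : DualWeights p q ω σ μ) {u : X → E}
    (hu : MemLp u (ENNReal.ofReal p) (weightedMeasure ω μ)) {C : ℝ} (hC : 0 ≤ C)
    (hle : ∀ f : X → E, MemLp f (ENNReal.ofReal q) (weightedMeasure σ μ) →
      ∫ x, ⟪u x, f x⟫ ∂μ ≤ C * lpNorm f (ENNReal.ofReal q) (weightedMeasure σ μ)) :
    lpNorm u (ENNReal.ofReal p) (weightedMeasure ω μ) ≤ C := by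
  have hum := hw.aestronglyMeasurable_left hu
  rw [← hw.lpNorm_rpow_smul_left hum]
  refine _root_.lpNorm_le_of_forall_integral_inner_le hw.holderConjugate
    ((hw.memLp_rpow_smul_left_iff hum).2 hu) hC fun h hh => ?_
  have hfm : AEStronglyMeasurable (fun x => ω x ^ p⁻¹ • h x) μ :=
    (hw.aemeasurable_left.pow_const _).aestronglyMeasurable.smul hh.1
  have hf_eq : (fun x => σ x ^ q⁻¹ • ω x ^ p⁻¹ • h x) =ᵐ[μ] h := by
    filter_upwards [hw.rpow_mul_rpow] with x hx
    rw [smul_smul, mul_comm, hx, one_smul]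
  have hf := hle _ ((hw.symm.memLp_rpow_smul_left_iff hfm).1 ((memLp_congr_ae hf_eq).2 hh))
  rw [← hw.symm.lpNorm_rpow_smul_left hfm, lpNorm_congr_ae hf_eq] at hf
  simpa only [real_inner_smul_left, real_inner_smul_right] using hf

end NormByDuality

/-- `ν` is finite on the compact subsets of `Ω`, so that for open `Ω` the test functions on `Ω`
belong to every `L^p(ν)`. -/
def IsFiniteOnCompactsIn {X : Type*} [MeasurableSpace X] [TopologicalSpace X] (ν : Measure X)
    (Ω : Set X) : Prop :=
  ∀ K ⊆ Ω, IsCompact K → ν K < ∞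

section TestFunctions

variable {d : ℕ} {Ω K : Set (Euc d)}

lemma IsFiniteOnCompactsIn.memLp {X E : Type*} [MeasurableSpace X] [TopologicalSpace X]
    [OpensMeasurableSpace X] [NormedAddCommGroup E] {ν : Measure X} {Ω : Set X}
    (hν : IsFiniteOnCompactsIn ν Ω) {f : X → E} (hf : Continuous f)
    (hf_compact : HasCompactSupport f) (hfΩ : tsupport f ⊆ Ω) (p : ℝ≥0∞) : MemLp f p ν := by
  have : IsFiniteMeasure (ν.restrict (tsupport f)) :=
    isFiniteMeasure_restrict.2 (hν _ hfΩ hf_compact).ne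
  rw [← Set.indicator_eq_self.2 (subset_tsupport f),
    memLp_indicator_iff_restrict (isClosed_tsupport f).measurableSet]
  exact hf.memLp_of_hasCompactSupport hf_compact

lemma exists_testFun_eqOn_one (hΩ : IsOpen Ω) (hK : IsCompact K) (hKΩ : K ⊆ Ω) :
    ∃ χ : Euc d → ℝ, TestFun Ω χ ∧ (∀ x, χ x ∈ Set.Icc 0 1) ∧ Set.EqOn χ 1 K := by
  obtain ⟨L, hL, hKL, hLΩ⟩ := exists_compact_between hK hΩ hKΩ
  obtain ⟨χ, hχ, hχ_range, hχ_supp, hχ_one⟩ := exists_contMDiff_support_eq_eq_one_iff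
    (n := (⊤ : ℕ∞)) (modelWithCornersSelf ℝ (Euc d)) isOpen_interior hK.isClosed hKL
  have hsupp : tsupport χ ⊆ L :=
    closure_minimal (hχ_supp ▸ interior_subset) hL.isClosed
  exact ⟨χ, ⟨contMDiff_iff_contDiff.1 hχ, hL.of_isClosed_subset (isClosed_tsupport χ) hsupp,
    hsupp.trans hLΩ⟩, fun x => hχ_range ⟨x, rfl⟩, fun x hx => (hχ_one x).1 hx⟩

lemma TestFun.mul_contDiff {χ g : Euc d → ℝ} (hχ : TestFun Ω χ) (hg : ContDiff ℝ (⊤ : ℕ∞) g) :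
    TestFun Ω (fun x => χ x * g x) :=
  ⟨hχ.1.mul hg, hχ.2.1.mul_right, (tsupport_mul_subset_left (f := χ) (g := g)).trans hχ.2.2⟩

lemma TestFun.const_mul {φ : Euc d → ℝ} (hφ : TestFun Ω φ) (c : ℝ) :
    TestFun Ω (fun x => c * φ x) :=
  ⟨contDiff_const.mul hφ.1, hφ.2.1.mul_left,
    (tsupport_mul_subset_right (f := fun _ => c) (g := φ)).trans hφ.2.2⟩

lemma TestFun.memLp {ν : Measure (Euc d)} (hν : IsFiniteOnCompactsIn ν Ω) {φ : Euc d → ℝ}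
    (hφ : TestFun Ω φ) (p : ℝ≥0∞) : MemLp φ p ν :=
  hν.memLp hφ.1.continuous hφ.2.1 hφ.2.2 p

lemma TestFun.continuous_gradient {φ : Euc d → ℝ} (hφ : TestFun Ω φ) :
    Continuous fun x => gradient φ x :=
  (InnerProductSpace.toDual ℝ (Euc d)).symm.continuous.comp
    (hφ.1.continuous_fderiv (by norm_num))

lemma TestFun.memLp_gradient {ν : Measure (Euc d)} (hν : IsFiniteOnCompactsIn ν Ω)
    {φ : Euc d → ℝ} (hφ : TestFun Ω φ) (p : ℝ≥0∞) : MemLp (fun x => gradient φ x) p ν := by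
  have hsupp : tsupport (fun x => gradient φ x) ⊆ tsupport φ :=
    (closure_mono (Function.support_comp_subset
      (map_zero (InnerProductSpace.toDual ℝ (Euc d)).symm) (fderiv ℝ φ))).trans
      (tsupport_fderiv_subset ℝ)
  exact hν.memLp hφ.continuous_gradient
    (hφ.2.1.of_isClosed_subset (isClosed_tsupport _) hsupp) (hsupp.trans hφ.2.2) p

end TestFunctions

section Density

lemma exists_isCompact_eLpNorm_indicator_compl_le {X E : Type*} [MeasurableSpace X]
    [TopologicalSpace X] [PolishSpace X] [BorelSpace X] [NormedAddCommGroup E] {ν : Measure X}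
    {Ω : Set X} (hΩ : MeasurableSet Ω) (hν : ν Ωᶜ = 0) {p : ℝ≥0∞} (hp₀ : p ≠ 0) (hp : p ≠ ∞)
    {f : X → E} (hf : MemLp f p ν) {ε : ℝ≥0∞} (hε : ε ≠ 0) :
    ∃ K ⊆ Ω, IsCompact K ∧ eLpNorm (Kᶜ.indicator f) p ν ≤ ε := by
  set m : Measure X := ν.withDensity fun x => ‖f x‖ₑ ^ p.toReal
  have hp_pos : 0 < p.toReal := ENNReal.toReal_pos hp₀ hp
  have : IsFiniteMeasure m :=
    isFiniteMeasure_withDensity (lintegral_rpow_enorm_lt_top_of_eLpNorm_lt_top hp₀ hp hf.2).ne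
  obtain ⟨K, hKΩ, hK, hmK⟩ := hΩ.exists_isCompact_sdiff_lt (measure_ne_top m Ω)
    (ENNReal.rpow_pos_of_nonneg (pos_iff_ne_zero.2 hε) hp_pos.le).ne'
  have hmKc : m Kᶜ ≤ ε ^ p.toReal := calc
    m Kᶜ ≤ m ((Ω \ K) ∪ Ωᶜ) := measure_mono fun x hx => by
      by_cases hxΩ : x ∈ Ω
      exacts [.inl ⟨hxΩ, hx⟩, .inr hxΩ]
    _ ≤ m (Ω \ K) + m Ωᶜ := measure_union_le _ _
    _ ≤ ε ^ p.toReal := by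
      rw [withDensity_absolutelyContinuous _ _ hν, add_zero]
      exact hmK.le
  have hKc : MeasurableSet Kᶜ := hK.measurableSet.compl
  refine ⟨K, hKΩ, hK, ?_⟩
  rwa [eLpNorm_indicator_eq_eLpNorm_restrict hKc, eLpNorm_eq_lintegral_rpow_enorm_toReal hp₀ hp,
    ← withDensity_apply _ hKc, one_div, ENNReal.rpow_inv_le_iff hp_pos]

lemma exists_testFun_eLpNorm_sub_le {d : ℕ} {Ω : Set (Euc d)} (hΩ : IsOpen Ω)
    {ν : Measure (Euc d)} (hν : ν Ωᶜ = 0) (hν_compact : IsFiniteOnCompactsIn ν Ω)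
    {p : ℝ≥0∞} (hp₁ : 1 ≤ p) (hp : p ≠ ∞) {f : Euc d → ℝ} (hf : MemLp f p ν) {ε : ℝ}
    (hε : 0 < ε) :
    ∃ ψ : Euc d → ℝ, TestFun Ω ψ ∧ eLpNorm (f - ψ) p ν ≤ ENNReal.ofReal ε := by
  obtain ⟨K, hKΩ, hK, hfK⟩ := exists_isCompact_eLpNorm_indicator_compl_le hΩ.measurableSet hν
    (one_pos.trans_le hp₁).ne' hp hf (ENNReal.ofReal_pos.2 (half_pos hε)).ne'
  obtain ⟨χ, hχ, hχ_mem, hχ_one⟩ := exists_testFun_eqOn_one hΩ hK hKΩ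
  have : IsFiniteMeasure (ν.restrict (tsupport χ)) :=
    isFiniteMeasure_restrict.2 (hν_compact _ hχ.2.2 hχ.2.1).ne
  have hfK_memLp : MemLp (K.indicator f) p ν := hf.indicator hK.measurableSet
  obtain ⟨g, -, hg, hfg⟩ := (hfK_memLp.restrict (tsupport χ)).exist_eLpNorm_sub_le hp hp₁
    (half_pos hε)
  refine ⟨fun x => χ x * g x, hχ.mul_contDiff hg, ?_⟩
  set r : Euc d → ℝ := fun x => χ x * (K.indicator f x - g x)
  have hr_meas : AEStronglyMeasurable r ν :=
    hχ.1.continuous.aestronglyMeasurable.mul (hfK_memLp.1.sub hg.continuous.aestronglyMeasurable)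
  have hr : eLpNorm r p ν ≤ ENNReal.ofReal (ε / 2) := by
    have hr_supp : (tsupport χ).indicator r = r :=
      Set.indicator_eq_self.2 ((Function.support_mul_subset_left χ _).trans (subset_tsupport χ))
    rw [← hr_supp, eLpNorm_indicator_eq_eLpNorm_restrict (isClosed_tsupport χ).measurableSet]
    refine (eLpNorm_mono fun x => ?_).trans hfg
    rw [norm_mul, Real.norm_of_nonneg (hχ_mem x).1]
    exact mul_le_of_le_one_left (norm_nonneg _) (hχ_mem x).2
  have hsplit : f - (fun x => χ x * g x) = Kᶜ.indicator f + r := by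
    ext x
    by_cases hx : x ∈ K
    · simp [r, hx, hχ_one hx]
    · simp [r, hx, sub_eq_add_neg]
  rw [hsplit, ← add_halves ε, ENNReal.ofReal_add (half_pos hε).le (half_pos hε).le]
  exact (eLpNorm_add_le (hf.1.indicator hK.measurableSet.compl) hr_meas hp₁).trans
    (add_le_add hfK hr)

end Density

section Limits

lemma abs_lpNorm_sub_lpNorm_le {X E : Type*} [MeasurableSpace X] {μ : Measure X}
    [NormedAddCommGroup E] {p : ℝ≥0∞} (hp : 1 ≤ p) {f g : X → E} (hf : MemLp f p μ)
    (hg : MemLp g p μ) : |lpNorm f p μ - lpNorm g p μ| ≤ lpNorm (f - g) p μ := by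
  rw [abs_sub_le_iff, sub_le_iff_le_add', sub_le_iff_le_add']
  refine ⟨lpNorm_le_lpNorm_add_lpNorm_sub' hg hp, ?_⟩
  rw [lpNorm_sub_comm]
  exact lpNorm_le_lpNorm_add_lpNorm_sub' hf hp

lemma tendsto_lpNorm {ι X E : Type*} [MeasurableSpace X] {μ : Measure X}
    [NormedAddCommGroup E] {p : ℝ≥0∞} (hp : 1 ≤ p) {l : Filter ι} {F : ι → X → E} {f : X → E}
    (hF : ∀ i, MemLp (F i) p μ) (hf : MemLp f p μ)
    (hlim : Tendsto (fun i => lpNorm (F i - f) p μ) l (𝓝 0)) :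
    Tendsto (fun i => lpNorm (F i) p μ) l (𝓝 (lpNorm f p μ)) :=
  tendsto_iff_norm_sub_tendsto_zero.2 <| squeeze_zero (fun _ => norm_nonneg _)
    (fun i => abs_lpNorm_sub_lpNorm_le hp (hF i) hf) hlim

lemma exists_seq_testFun_tendsto {d : ℕ} {Ω : Set (Euc d)} (hΩ : IsOpen Ω)
    {ν : Measure (Euc d)} (hν : ν Ωᶜ = 0) (hν_compact : IsFiniteOnCompactsIn ν Ω)
    {p : ℝ≥0∞} (hp₁ : 1 ≤ p) (hp : p ≠ ∞) {f : Euc d → ℝ} (hf : MemLp f p ν) :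
    ∃ ψ : ℕ → Euc d → ℝ, (∀ n, TestFun Ω (ψ n)) ∧
      Tendsto (fun n => lpNorm (ψ n - f) p ν) atTop (𝓝 0) := by
  choose ψ hψ hfψ using fun n : ℕ =>
    exists_testFun_eLpNorm_sub_le hΩ hν hν_compact hp₁ hp hf (ε := 1 / (n + 1)) (by positivity)
  refine ⟨ψ, hψ, squeeze_zero (fun _ => lpNorm_nonneg) (fun n => ?_)
    tendsto_one_div_add_atTop_nhds_zero_nat⟩
  rw [lpNorm_sub_comm, ← toReal_eLpNorm (hf.1.sub ((hψ n).memLp hν_compact p).1)]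
  exact ENNReal.toReal_le_of_le_ofReal (by positivity) (hfψ n)

lemma DualWeights.lpNorm_le_of_forall_testFun {d : ℕ} {Ω : Set (Euc d)} {p q : ℝ}
    {ω σ : Euc d → ℝ} (hw : DualWeights p q ω σ (volume.restrict Ω)) (hΩ : IsOpen Ω)
    (hσ : IsFiniteOnCompactsIn (weightedMeasure σ (volume.restrict Ω)) Ω) {v : Euc d → ℝ}
    (hv : MemLp v (ENNReal.ofReal p) (weightedMeasure ω (volume.restrict Ω)))
    {C : ℝ} (hC : 0 ≤ C)
    (hle : ∀ Ψ : Euc d → ℝ, TestFun Ω Ψ → ∫ x in Ω, ⟪v x, Ψ x⟫ ≤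
      C * lpNorm Ψ (ENNReal.ofReal q) (weightedMeasure σ (volume.restrict Ω))) :
    lpNorm v (ENNReal.ofReal p) (weightedMeasure ω (volume.restrict Ω)) ≤ C := by
  refine hw.lpNorm_le_of_forall_integral_inner_le hv hC fun f hf => ?_
  have hΩc : weightedMeasure σ (volume.restrict Ω) Ωᶜ = 0 :=
    weightedMeasure_absolutelyContinuous (by simp [hΩ.measurableSet.compl])
  obtain ⟨ψ, hψ, hlim⟩ :=
    exists_seq_testFun_tendsto hΩ hΩc hσ hw.symm.one_le_left ENNReal.ofReal_ne_top hf
  have hψ_memLp (n : ℕ) := (hψ n).memLp hσ (ENNReal.ofReal q)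
  have hpair := hw.symm.tendsto_integral_inner hψ_memLp hf hv hlim
  simp only [fun x y => real_inner_comm (v x) y] at hpair
  exact le_of_tendsto_of_tendsto' hpair
    ((tendsto_lpNorm hw.symm.one_le_left hψ_memLp hf hlim).const_mul C) fun n => hle _ (hψ n)

end Limits

section WeightedNorms

variable {d : ℕ} {Ω : Set (Euc d)} {p q : ℝ} {ω σ : Euc d → ℝ}

lemma isFiniteOnCompactsIn_weightedMeasure {X : Type*} [MeasurableSpace X] [TopologicalSpace X]
    {μ : Measure X} [SFinite μ] {ρ : X → ℝ} (hρ : LocallyIntegrable ρ μ) (Ω : Set X) :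
    IsFiniteOnCompactsIn (weightedMeasure ρ μ) Ω := fun K _ hK => by
  rw [weightedMeasure, withDensity_apply' _ K]
  exact ((hρ.integrableOn_isCompact hK).lintegral_lt_top)

lemma isFiniteOnCompactsIn_of_forall_memLp {ν : Measure (Euc d)} (hΩ : IsOpen Ω) {r : ℝ≥0∞}
    (hr₀ : r ≠ 0) (hr : r ≠ ∞) (h : ∀ φ : Euc d → ℝ, TestFun Ω φ → MemLp φ r ν) :
    IsFiniteOnCompactsIn ν Ω := fun K hKΩ hK => by
  obtain ⟨χ, hχ, -, hχ_one⟩ := exists_testFun_eqOn_one hΩ hK hKΩ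
  have hone : MemLp (fun _ => (1 : ℝ)) r (ν.restrict K) :=
    ((h χ hχ).restrict K).ae_eq (ae_restrict_of_forall_mem hK.measurableSet hχ_one)
  simpa only [Measure.restrict_apply_univ] using
    ((memLp_const_iff hr₀ hr).1 hone).resolve_left one_ne_zero

lemma IsWeight.dualWeights (hω : IsWeight ω) (hp : 1 < p) (Ω : Set (Euc d)) :
    DualWeights p (p / (p - 1)) ω (dualWeight p ω) (volume.restrict Ω) where
  holderConjugate := .conjExponent hp
  aemeasurable_left := hω.1.aestronglyMeasurable.aemeasurable.restrict
  aemeasurable_right := hω.1.aestronglyMeasurable.aemeasurable.restrict.pow_const _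
  pos_left := ae_restrict_of_ae hω.2
  pos_right := ae_restrict_of_ae (hω.2.mono fun _ hx => Real.rpow_pos_of_pos hx _)
  rpow_mul_rpow := by
    refine ae_restrict_of_ae (hω.2.mono fun x hx => ?_)
    have hp₀ : p - 1 ≠ 0 := (sub_pos.2 hp).ne'
    rw [dualWeight, ← Real.rpow_mul hx.le, ← Real.rpow_add hx]
    convert! Real.rpow_zero (ω x) using 2
    field_simp
    ring

lemma DualWeights.wNorm_eq_lpNorm (hw : DualWeights p q ω σ (volume.restrict Ω)) {f : Euc d → ℝ}
    (hf : AEStronglyMeasurable f (volume.restrict Ω)) :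
    wNorm p ω Ω f = lpNorm f (ENNReal.ofReal p) (weightedMeasure ω (volume.restrict Ω)) := by
  rw [lpNorm_weightedMeasure hw.aemeasurable_left hw.pos_left hw.holderConjugate.pos hf, ← one_div]
  rfl

lemma DualWeights.wNormV_eq_lpNorm (hw : DualWeights p q ω σ (volume.restrict Ω))
    {F : Euc d → Euc d} (hF : AEStronglyMeasurable F (volume.restrict Ω)) :
    wNormV p ω Ω F = lpNorm F (ENNReal.ofReal p) (weightedMeasure ω (volume.restrict Ω)) := by
  rw [lpNorm_weightedMeasure hw.aemeasurable_left hw.pos_left hw.holderConjugate.pos hF, ← one_div]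
  rfl

lemma DualWeights.memWLp_iff (hw : DualWeights p q ω σ (volume.restrict Ω)) {f : Euc d → ℝ} :
    MemWLp p ω Ω f ↔ MemLp f (ENNReal.ofReal p) (weightedMeasure ω (volume.restrict Ω)) :=
  (memLp_weightedMeasure_iff hw.aemeasurable_left hw.pos_left hw.holderConjugate.pos).symm

lemma DualWeights.memWLpV_iff (hw : DualWeights p q ω σ (volume.restrict Ω)) {F : Euc d → Euc d} :
    MemWLpV p ω Ω F ↔ MemLp F (ENNReal.ofReal p) (weightedMeasure ω (volume.restrict Ω)) :=
  (memLp_weightedMeasure_iff hw.aemeasurable_left hw.pos_left hw.holderConjugate.pos).symm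

lemma MemW1p0.exists_seq_testFun (hw : DualWeights p q ω σ (volume.restrict Ω))
    {u : Euc d → ℝ} {G : Euc d → Euc d} (hu : MemW1p0 p ω Ω u G) :
    ∃ φ : ℕ → Euc d → ℝ, (∀ n, TestFun Ω (φ n)) ∧
      Tendsto (fun n => lpNorm (φ n - u) (ENNReal.ofReal p)
        (weightedMeasure ω (volume.restrict Ω))) atTop (𝓝 0) ∧
      Tendsto (fun n => lpNorm ((fun x => gradient (φ n) x) - G) (ENNReal.ofReal p)
        (weightedMeasure ω (volume.restrict Ω))) atTop (𝓝 0) := by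
  obtain ⟨hu_mem, hG_mem, -, happrox⟩ := hu
  choose φ hφ hlt using fun n : ℕ => happrox (1 / (n + 1)) (by positivity)
  have hsum (n : ℕ) : lpNorm (φ n - u) (ENNReal.ofReal p) (weightedMeasure ω (volume.restrict Ω)) +
      lpNorm ((fun x => gradient (φ n) x) - G) (ENNReal.ofReal p)
        (weightedMeasure ω (volume.restrict Ω)) ≤ 1 / ((n : ℝ) + 1) := by
    rw [lpNorm_sub_comm, lpNorm_sub_comm _ G,
      ← hw.wNorm_eq_lpNorm (hu_mem.1.sub (hφ n).1.continuous.aestronglyMeasurable),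
      ← hw.wNormV_eq_lpNorm (hG_mem.1.sub (hφ n).continuous_gradient.aestronglyMeasurable)]
    exact (hlt n).le
  refine ⟨φ, hφ, ?_, ?_⟩ <;>
    refine squeeze_zero (fun _ => lpNorm_nonneg) (fun n => ?_)
      tendsto_one_div_add_atTop_nhds_zero_nat
  · exact (le_add_of_nonneg_right lpNorm_nonneg).trans (hsum n)
  · exact (le_add_of_nonneg_left lpNorm_nonneg).trans (hsum n)

end WeightedNorms

section Coefficients

lemma memLp_clm_apply {X E F : Type*} [MeasurableSpace X] {ν : Measure X} [NormedAddCommGroup E]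
    [NormedSpace ℝ E] [NormedAddCommGroup F] [NormedSpace ℝ F] {B : X → E →L[ℝ] F}
    (hB : MemLp B ∞ ν) {p : ℝ≥0∞} {f : X → E} (hf : MemLp f p ν) :
    MemLp (fun x => B x (f x)) p ν :=
  (ContinuousLinearMap.id ℝ (E →L[ℝ] F)).memLp_of_bilin p hB hf

lemma lpNorm_clm_apply_le {X E F : Type*} [MeasurableSpace X] {ν : Measure X}
    [NormedAddCommGroup E] [NormedSpace ℝ E] [NormedAddCommGroup F] [NormedSpace ℝ F]
    {B : X → E →L[ℝ] F} (hB : MemLp B ∞ ν) {p : ℝ≥0∞} {f : X → E} (hf : MemLp f p ν) :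
    lpNorm (fun x => B x (f x)) p ν ≤ lpNorm B ∞ ν * lpNorm f p ν := by
  rw [← toReal_eLpNorm (memLp_clm_apply hB hf).1, ← toReal_eLpNorm hB.1, ← toReal_eLpNorm hf.1,
    ← ENNReal.toReal_mul]
  refine ENNReal.toReal_mono (ENNReal.mul_ne_top hB.eLpNorm_ne_top hf.eLpNorm_ne_top) ?_
  simpa only [one_mul, ENNReal.coe_one] using
    eLpNorm_le_eLpNorm_top_mul_eLpNorm p B hf.1 (fun T y => T y) 1
      (ae_of_all _ fun x => by simpa only [one_mul] using (B x).le_opNNNorm (f x))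

lemma memLp_top_weightedMeasure {X E : Type*} [MeasurableSpace X] {μ : Measure X}
    [NormedAddCommGroup E] {f : X → E} (hf : MemLp f ∞ μ) (ρ : X → ℝ) :
    MemLp f ∞ (weightedMeasure ρ μ) :=
  ⟨hf.1.mono_ac weightedMeasure_absolutelyContinuous, by
    rw [eLpNorm_exponent_top]
    exact (eLpNormEssSup_mono_measure f weightedMeasure_absolutelyContinuous).trans_lt
      (eLpNorm_exponent_top (f := f) (μ := μ) ▸ hf.2)⟩

lemma memLp_top_of_continuousOn_closure {X E : Type*} [MeasurableSpace X] [PseudoMetricSpace X]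
    [ProperSpace X] [OpensMeasurableSpace X] [NormedAddCommGroup E]
    [SecondCountableTopologyEither X E] {μ : Measure X} {Ω : Set X}
    (hΩ : IsOpen Ω) (hΩ_bdd : Bornology.IsBounded Ω) {f : X → E} (hf : ContinuousOn f (closure Ω)) :
    MemLp f ∞ (μ.restrict Ω) := by
  obtain ⟨C, hC⟩ := hΩ_bdd.isCompact_closure.exists_bound_of_continuousOn hf
  exact memLp_top_of_bound ((hf.mono subset_closure).aestronglyMeasurable hΩ.measurableSet) C
    (ae_restrict_of_forall_mem hΩ.measurableSet fun x hx => hC x (subset_closure hx))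

lemma setIntegral_inner_clm_comm {X E : Type*} [MeasurableSpace X] [NormedAddCommGroup E]
    [InnerProductSpace ℝ E] {μ : Measure X} {Ω : Set X} (hΩ : MeasurableSet Ω) {B : X → E →L[ℝ] E}
    (hB : ∀ x ∈ Ω, ∀ y z : E, ⟪B x y, z⟫ = ⟪y, B x z⟫) (f g : X → E) :
    ∫ x in Ω, ⟪B x (f x), g x⟫ ∂μ = ∫ x in Ω, ⟪B x (g x), f x⟫ ∂μ :=
  setIntegral_congr_fun hΩ fun x hx => (hB x hx _ _).trans (real_inner_comm _ _)

end Coefficients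

section WeakSolutions

variable {d : ℕ} {Ω : Set (Euc d)} {p q : ℝ} {ω σ : Euc d → ℝ}

lemma MemW1p0.integral_eq_of_forall_testFun (hw : DualWeights p q ω σ (volume.restrict Ω))
    (hω : IsFiniteOnCompactsIn (weightedMeasure ω (volume.restrict Ω)) Ω)
    {B : Euc d → Euc d →L[ℝ] Euc d} (hB : MemLp B ∞ (volume.restrict Ω))
    {v : Euc d → ℝ} {Gv : Euc d → Euc d} (hv : MemW1p0 p ω Ω v Gv)
    {G : Euc d → Euc d} (hG : MemLp G (ENNReal.ofReal q) (weightedMeasure σ (volume.restrict Ω)))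
    {Ψ : Euc d → ℝ} (hΨ : MemLp Ψ (ENNReal.ofReal q) (weightedMeasure σ (volume.restrict Ω)))
    (heq : ∀ φ : Euc d → ℝ, TestFun Ω φ →
      ∫ x in Ω, ⟪B x (gradient φ x), G x⟫ = ∫ x in Ω, ⟪φ x, Ψ x⟫) :
    ∫ x in Ω, ⟪B x (Gv x), G x⟫ = ∫ x in Ω, ⟪v x, Ψ x⟫ := by
  obtain ⟨φ, hφ, hφ_lim, hgrad_lim⟩ := hv.exists_seq_testFun hw
  have hBω := memLp_top_weightedMeasure hB ω
  have hGv := hw.memWLpV_iff.1 hv.2.1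
  have hgrad (n : ℕ) := (hφ n).memLp_gradient hω (ENNReal.ofReal p)
  have hB_lim : Tendsto (fun n => lpNorm ((fun x => B x (gradient (φ n) x)) - fun x => B x (Gv x))
      (ENNReal.ofReal p) (weightedMeasure ω (volume.restrict Ω))) atTop (𝓝 0) := by
    have hmul_lim := hgrad_lim.const_mul (lpNorm B ∞ (weightedMeasure ω (volume.restrict Ω)))
    rw [mul_zero] at hmul_lim
    refine squeeze_zero (fun _ => lpNorm_nonneg) (fun n => ?_) hmul_lim
    convert lpNorm_clm_apply_le hBω ((hgrad n).sub hGv) using 2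
    ext1 x
    exact (map_sub (B x) _ _).symm
  have hleft := hw.tendsto_integral_inner (fun n => memLp_clm_apply hBω (hgrad n))
    (memLp_clm_apply hBω hGv) hG hB_lim
  have hright := hw.tendsto_integral_inner (fun n => (hφ n).memLp hω (ENNReal.ofReal p))
    (hw.memWLp_iff.1 hv.1) hΨ hφ_lim
  exact tendsto_nhds_unique hleft (hright.congr fun n => (heq _ (hφ n)).symm)

lemma MemW1p0.integral_inner_le_of_forall_testFun (hw : DualWeights p q ω σ (volume.restrict Ω))
    (hω : IsFiniteOnCompactsIn (weightedMeasure ω (volume.restrict Ω)) Ω)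
    {w : Euc d → ℝ} {Gw : Euc d → Euc d} (hmem : MemW1p0 p ω Ω w Gw)
    {F : Euc d → Euc d} (hF : MemLp F (ENNReal.ofReal q) (weightedMeasure σ (volume.restrict Ω)))
    {D : ℝ} (hle : ∀ φ : Euc d → ℝ, TestFun Ω φ →
      ∫ x in Ω, ⟪F x, gradient φ x⟫ ≤ D * wNormV p ω Ω (fun x => gradient φ x)) :
    ∫ x in Ω, ⟪F x, Gw x⟫ ≤ D * wNormV p ω Ω Gw := by
  obtain ⟨φ, hφ, -, hlim⟩ := hmem.exists_seq_testFun hw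
  have hGw := hw.memWLpV_iff.1 hmem.2.1
  have hgrad (n : ℕ) := (hφ n).memLp_gradient hω (ENNReal.ofReal p)
  have hpair := hw.tendsto_integral_inner hgrad hGw hF hlim
  simp only [fun x y => real_inner_comm (F x) y] at hpair
  rw [hw.wNormV_eq_lpNorm hmem.2.1.1]
  refine le_of_tendsto_of_tendsto' hpair
    ((tendsto_lpNorm hw.one_le_left hgrad hGw hlim).const_mul D) fun n => ?_
  rw [← hw.wNormV_eq_lpNorm (hφ n).continuous_gradient.aestronglyMeasurable]
  exact hle _ (hφ n)

lemma TestFun.memLp_of_adjoint (hw : DualWeights p q ω σ (volume.restrict Ω))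
    {B : Euc d → Euc d →L[ℝ] Euc d} {Ψ : Euc d → ℝ} (hΨ : TestFun Ω Ψ) {G : Euc d → Euc d}
    (hG : MemLp G (ENNReal.ofReal p) (weightedMeasure ω (volume.restrict Ω)))
    (heq : ∫ x in Ω, ⟪B x (gradient Ψ x), G x⟫ = ∫ x in Ω, ⟪Ψ x, Ψ x⟫) {C₀ : ℝ}
    (hle : wNormV p ω Ω G ≤ C₀ * wNorm p ω Ω Ψ) :
    MemLp Ψ (ENNReal.ofReal p) (weightedMeasure ω (volume.restrict Ω)) := by
  by_contra hΨ_not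
  have hG_zero : G =ᵐ[volume.restrict Ω] 0 := by
    rw [hw.wNormV_eq_lpNorm (hw.aestronglyMeasurable_left hG), hw.wNorm_eq_lpNorm
      hΨ.1.continuous.aestronglyMeasurable, lpNorm_of_not_memLp hΨ_not, mul_zero] at hle
    exact (absolutelyContinuous_weightedMeasure hw.aemeasurable_left hw.pos_left).ae_eq
      ((lpNorm_eq_zero hG (one_pos.trans_le hw.one_le_left).ne').1 (hle.antisymm lpNorm_nonneg))
  have hΨ_sq : ∫ x in Ω, ⟪Ψ x, Ψ x⟫ = 0 := by
    rw [← heq]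
    refine integral_eq_zero_of_ae (hG_zero.mono fun x hx => ?_)
    simp only [hx, Pi.zero_apply, inner_zero_right]
  have hΨ_zero : Ψ =ᵐ[volume.restrict Ω] 0 := by
    have hint : Integrable (fun x => ⟪Ψ x, Ψ x⟫) (volume.restrict Ω) :=
      ((hΨ.1.continuous.inner hΨ.1.continuous).integrable_of_hasCompactSupport
        hΨ.2.1.mul_left).integrableOn
    exact ((integral_eq_zero_iff_of_nonneg (fun x => real_inner_self_nonneg) hint).1 hΨ_sq).mono
      fun x hx => inner_self_eq_zero.1 hx
  exact hΨ_not ((memLp_congr_ae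
    (weightedMeasure_absolutelyContinuous.ae_eq hΨ_zero)).2 MemLp.zero)

end WeakSolutions

section DualNorm

variable {d : ℕ} {Ω : Set (Euc d)} {p q : ℝ} {ω σ : Euc d → ℝ} {φ : Euc d → ℝ}
  {Φ : (Euc d → ℝ) → ℝ}

lemma TestFun.gradient_const_mul (hφ : TestFun Ω φ) (c : ℝ) (x : Euc d) :
    gradient (fun y => c * φ y) x = c • gradient φ x := by
  rw [gradient, fderiv_const_mul (hφ.1.differentiable (by norm_num) x), map_smul, gradient]

lemma DualWeights.wNormV_nonneg (hw : DualWeights p q ω σ (volume.restrict Ω))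
    (F : Euc d → Euc d) : 0 ≤ wNormV p ω Ω F :=
  Real.rpow_nonneg (integral_nonneg_of_ae (hw.pos_left.mono fun _ hx =>
    mul_nonneg (Real.rpow_nonneg (norm_nonneg _) p) hx.le)) _

lemma DualWeights.wNormV_gradient_const_mul (hw : DualWeights p q ω σ (volume.restrict Ω))
    (hφ : TestFun Ω φ) (c : ℝ) :
    wNormV p ω Ω (fun x => gradient (fun y => c * φ y) x) =
      |c| * wNormV p ω Ω (fun x => gradient φ x) := by
  have hgrad := hφ.continuous_gradient.aestronglyMeasurable (μ := volume.restrict Ω)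
  rw [show (fun x => gradient (fun y => c * φ y) x) = c • fun x => gradient φ x from
    funext (hφ.gradient_const_mul c), hw.wNormV_eq_lpNorm hgrad,
    hw.wNormV_eq_lpNorm (hgrad.const_smul c), lpNorm_const_smul, coe_nnnorm, Real.norm_eq_abs]

lemma IsWeight.le_dualNorm (hω : IsWeight ω) (hp : 1 < p)
    (hΦ_bdd : ∃ c : ℝ, ∀ φ : Euc d → ℝ, TestFun Ω φ →
      |Φ φ| ≤ c * wNormV (p / (p - 1)) (dualWeight p ω) Ω (fun x => gradient φ x))
    (hφ : TestFun Ω φ)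
    (hφ_le : wNormV (p / (p - 1)) (dualWeight p ω) Ω (fun x => gradient φ x) ≤ 1) :
    Φ φ ≤ dualNorm p ω Ω Φ := by
  obtain ⟨c, hc⟩ := hΦ_bdd
  refine le_csSup ⟨|c|, ?_⟩ ⟨φ, hφ, hφ_le, rfl⟩
  rintro _ ⟨ψ, hψ, hψ_le, rfl⟩
  calc Φ ψ ≤ c * wNormV (p / (p - 1)) (dualWeight p ω) Ω (fun x => gradient ψ x) :=
        (le_abs_self _).trans (hc ψ hψ)
    _ ≤ |c| * wNormV (p / (p - 1)) (dualWeight p ω) Ω (fun x => gradient ψ x) :=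
        mul_le_mul_of_nonneg_right (le_abs_self c)
          ((hω.dualWeights hp Ω).symm.wNormV_nonneg _)
    _ ≤ |c| := mul_le_of_le_one_right (abs_nonneg c) hψ_le

lemma IsWeight.dualNorm_nonneg (hω : IsWeight ω) (hp : 1 < p)
    (hΦ_bdd : ∃ c : ℝ, ∀ φ : Euc d → ℝ, TestFun Ω φ →
      |Φ φ| ≤ c * wNormV (p / (p - 1)) (dualWeight p ω) Ω (fun x => gradient φ x)) :
    0 ≤ dualNorm p ω Ω Φ := by
  have hzero : TestFun Ω (fun _ => (0 : ℝ)) :=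
    ⟨contDiff_const, .zero, tsupport_zero.trans_subset (Set.empty_subset Ω)⟩
  have hgrad : wNormV (p / (p - 1)) (dualWeight p ω) Ω
      (fun x => gradient (fun _ : Euc d => (0 : ℝ)) x) = 0 := by
    simpa only [zero_mul, abs_zero] using
      (hω.dualWeights hp Ω).symm.wNormV_gradient_const_mul hzero 0
  have hΦ_zero : Φ (fun _ => 0) = 0 := by
    obtain ⟨c, hc⟩ := hΦ_bdd
    simpa only [hgrad, mul_zero, abs_nonpos_iff] using hc _ hzero
  exact hΦ_zero ▸ hω.le_dualNorm hp hΦ_bdd hzero (hgrad.trans_le zero_le_one)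

lemma IsWeight.le_dualNorm_mul_wNormV (hω : IsWeight ω) (hp : 1 < p)
    (hΦ_bdd : ∃ c : ℝ, ∀ φ : Euc d → ℝ, TestFun Ω φ →
      |Φ φ| ≤ c * wNormV (p / (p - 1)) (dualWeight p ω) Ω (fun x => gradient φ x))
    (hφ : TestFun Ω φ) (hΦ_mul : ∀ c : ℝ, Φ (fun x => c * φ x) = c * Φ φ) :
    Φ φ ≤ dualNorm p ω Ω Φ *
      wNormV (p / (p - 1)) (dualWeight p ω) Ω (fun x => gradient φ x) := by
  have hw := (hω.dualWeights hp Ω).symm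
  set N := wNormV (p / (p - 1)) (dualWeight p ω) Ω (fun x => gradient φ x) with hN_def
  rcases (hw.wNormV_nonneg (fun x => gradient φ x)).eq_or_lt' with hN | hN
  · obtain ⟨c, hc⟩ := hΦ_bdd
    simpa only [hN_def, hN, mul_zero] using (le_abs_self _).trans (hc φ hφ)
  · have hle := hω.le_dualNorm hp hΦ_bdd (hφ.const_mul N⁻¹) (by
      rw [hw.wNormV_gradient_const_mul hφ, abs_of_pos (inv_pos.2 hN)]
      exact (inv_mul_cancel₀ hN.ne').le)
    rwa [hΦ_mul, inv_mul_le_iff₀ hN, mul_comm] at hle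

end DualNorm

theorem duality_Lp_bound_from_adjoint_solvability_general {d : ℕ} {Ω : Set (Euc d)}
    (hΩ : IsOpen Ω) {p : ℝ} (hp : 1 < p) {ω : Euc d → ℝ} (hω : IsWeight ω)
    {B : Euc d → Euc d →L[ℝ] Euc d} (hB : MemLp B ∞ (volume.restrict Ω)) {C₀ : ℝ} (hC₀ : 0 ≤ C₀)
    (hadj : ∀ Ψ : Euc d → ℝ, TestFun Ω Ψ →
      ∃ (w : Euc d → ℝ) (Gw : Euc d → Euc d),
        MemW1p0 (p / (p - 1)) (dualWeight p ω) Ω w Gw ∧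
        (∀ φ : Euc d → ℝ, TestFun Ω φ →
          (∫ x in Ω, ⟪B x (gradient φ x), Gw x⟫) = ∫ x in Ω, Ψ x * φ x) ∧
        wNormV (p / (p - 1)) (dualWeight p ω) Ω Gw ≤
          C₀ * wNorm (p / (p - 1)) (dualWeight p ω) Ω Ψ)
    {v : Euc d → ℝ} {Gv : Euc d → Euc d} (hv : MemW1p0 p ω Ω v Gv) {Φ : (Euc d → ℝ) → ℝ}
    (hΦ_bdd : ∃ c : ℝ, ∀ φ : Euc d → ℝ, TestFun Ω φ →
      |Φ φ| ≤ c * wNormV (p / (p - 1)) (dualWeight p ω) Ω (fun x => gradient φ x))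
    (hΦ : ∀ φ : Euc d → ℝ, TestFun Ω φ → (∫ x in Ω, ⟪B x (Gv x), gradient φ x⟫) = Φ φ) :
    wNorm p ω Ω v ≤ C₀ * dualNorm p ω Ω Φ := by
  have hw := hω.dualWeights hp Ω
  have hω_compact : IsFiniteOnCompactsIn (weightedMeasure ω (volume.restrict Ω)) Ω :=
    isFiniteOnCompactsIn_weightedMeasure (hω.1.mono_measure Measure.restrict_le_self) Ω
  have hσ_compact := isFiniteOnCompactsIn_of_forall_memLp hΩ
    (one_pos.trans_le hw.symm.one_le_left).ne' ENNReal.ofReal_ne_top fun Ψ hΨ => by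
      obtain ⟨w, Gw, hmem, heq, hle⟩ := hadj Ψ hΨ
      exact hΨ.memLp_of_adjoint hw.symm (hw.symm.memWLpV_iff.1 hmem.2.1) (heq Ψ hΨ) hle
  have hBGv := memLp_clm_apply (memLp_top_weightedMeasure hB ω) (hw.memWLpV_iff.1 hv.2.1)
  have hΦ_nonneg := hω.dualNorm_nonneg hp hΦ_bdd
  rw [hw.wNorm_eq_lpNorm hv.1.1]
  refine hw.lpNorm_le_of_forall_testFun hΩ hσ_compact (hw.memWLp_iff.1 hv.1)
    (mul_nonneg hC₀ hΦ_nonneg) fun Ψ hΨ => ?_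
  obtain ⟨w, Gw, hmem, heq, hle⟩ := hadj Ψ hΨ
  calc ∫ x in Ω, ⟪v x, Ψ x⟫ = ∫ x in Ω, ⟪B x (Gv x), Gw x⟫ :=
      (hv.integral_eq_of_forall_testFun hw hω_compact hB (hw.symm.memWLpV_iff.1 hmem.2.1)
        (hΨ.memLp hσ_compact _) heq).symm
    _ ≤ dualNorm p ω Ω Φ * wNormV (p / (p - 1)) (dualWeight p ω) Ω Gw :=
      hmem.integral_inner_le_of_forall_testFun hw.symm hσ_compact hBGv fun φ hφ => by
        rw [hΦ φ hφ]
        refine hω.le_dualNorm_mul_wNormV hp hΦ_bdd hφ fun c => ?_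
        simp only [← hΦ _ hφ, ← hΦ _ (hφ.const_mul c), hφ.gradient_const_mul c,
          real_inner_smul_right, integral_const_mul]
    _ ≤ dualNorm p ω Ω Φ * (C₀ * wNorm (p / (p - 1)) (dualWeight p ω) Ω Ψ) :=
      mul_le_mul_of_nonneg_left hle hΦ_nonneg
    _ = C₀ * dualNorm p ω Ω Φ * lpNorm Ψ (ENNReal.ofReal (p / (p - 1)))
          (weightedMeasure (dualWeight p ω) (volume.restrict Ω)) := by
      rw [hw.symm.wNorm_eq_lpNorm hΨ.1.continuous.aestronglyMeasurable]
      ring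

/-- duality argument. Let `d ∈ {2,3}`, `Ω ⊆ ℝ^d` a bounded convex polytope,
`p ∈ (1,∞)`, `ω ∈ A_p`, with conjugate exponent `p' = p/(p-1)` and dual weight
`ω' = ω^{-1/(p-1)}`. Let `B` be a smooth symmetric-valued coefficient with `αI ⪯ B(x)` on `Ω̄`.
Suppose `C₀ > 0` is such that for every test function `Ψ` the (adjoint) problem
`-div(B∇w) = Ψ` has a solution `w ∈ W^{1,p'}_0(ω',Ω)` with
`‖∇w‖_{L^{p'}(ω',Ω)} ≤ C₀ ‖Ψ‖_{L^{p'}(ω',Ω)}`. Then every `v ∈ W^{1,p}_0(ω,Ω)` with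
`-div(B∇v) = Φ` in `𝒟'(Ω)` for some `Φ ∈ W^{-1,p}(ω,Ω)` satisfies
`‖v‖_{L^p(ω,Ω)} ≤ C₀ ‖Φ‖_{W^{-1,p}(ω,Ω)}`. -/
theorem duality_Lp_bound_from_adjoint_solvability
    (d : ℕ) (hd : d = 2 ∨ d = 3)
    (Ω : Set (Euc d)) (hΩ : IsBoundedConvexPolytope Ω)
    (p : ℝ) (hp : 1 < p) (ω : Euc d → ℝ) (hω : IsAp p ω)
    (B : Euc d → Euc d →L[ℝ] Euc d) (α : ℝ) (hα : 0 < α)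
    (hBsmooth : ContDiffOn ℝ (⊤ : ℕ∞) B (closure Ω))
    (hBsymm : ∀ x ∈ closure Ω, ∀ v w : Euc d, ⟪B x v, w⟫ = ⟪v, B x w⟫)
    (hBlow : ∀ x ∈ closure Ω, ∀ v : Euc d, α * ‖v‖ ^ 2 ≤ ⟪B x v, v⟫)
    (C₀ : ℝ) (hC₀ : 0 < C₀)
    (hadj : ∀ Ψ : Euc d → ℝ, TestFun Ω Ψ →
      ∃ (w : Euc d → ℝ) (Gw : Euc d → Euc d),
        MemW1p0 (p / (p - 1)) (dualWeight p ω) Ω w Gw ∧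
        (∀ φ : Euc d → ℝ, TestFun Ω φ →
          (∫ x in Ω, ⟪B x (Gw x), gradient φ x⟫) = ∫ x in Ω, Ψ x * φ x) ∧
        wNormV (p / (p - 1)) (dualWeight p ω) Ω Gw ≤
          C₀ * wNorm (p / (p - 1)) (dualWeight p ω) Ω Ψ) :
    ∀ (v : Euc d → ℝ) (Gv : Euc d → Euc d), MemW1p0 p ω Ω v Gv →
    ∀ Φ : (Euc d → ℝ) → ℝ,
      (∃ c : ℝ, ∀ φ : Euc d → ℝ, TestFun Ω φ →
        |Φ φ| ≤ c * wNormV (p / (p - 1)) (dualWeight p ω) Ω (fun x => gradient φ x)) →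
      (∀ φ : Euc d → ℝ, TestFun Ω φ →
        (∫ x in Ω, ⟪B x (Gv x), gradient φ x⟫) = Φ φ) →
      wNorm p ω Ω v ≤ C₀ * dualNorm p ω Ω Φ := by
  intro v Gv hv Φ hΦ_bdd hΦ
  refine duality_Lp_bound_from_adjoint_solvability_general hΩ.1 hp hω.1
    (memLp_top_of_continuousOn_closure hΩ.1 hΩ.2.2.1 hBsmooth.continuousOn) hC₀.le
    (fun Ψ hΨ => ?_) hv hΦ_bdd hΦ
  obtain ⟨w, Gw, hmem, heq, hle⟩ := hadj Ψ hΨ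
  exact ⟨w, Gw, hmem, fun φ hφ => (setIntegral_inner_clm_comm hΩ.1.measurableSet
    (fun x hx => hBsymm x (subset_closure hx)) _ _).trans (heq φ hφ), hle⟩
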